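/- arXiv:2510.20045 — 2 statements merged into one kernel-verified Lean document; each statement's English description precedes it below -/
import Mathlib

section
/- Let 𝟙 : ℂ × ℤ → ℂ be the ground state 𝟙(σ,b) = Γ(1/2 + b/2 - iσ) if b = 0 and 0 otherwise. Then for every σ ∈ ℂ with σ ≠ 0 and every b ∈ ℤ: (X𝟙)(σ,b) = (-X̃𝟙)(σ,b) and (P𝟙)(σ,b) = (-P̃𝟙)(σ,b). (This is the paper's lemma relating the holomorphic and antiholomorphic representations on the ground state, the key input to the trace property ⟨1|α_C(r^{±e}) = -⟨1|ᾱ_C(r^{∓e}).) -/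
/-!
Both identities are trivial unless the shifted `b` vanishes, since the ground state is supported on
`b = 0`. In the remaining cases (`b = 1` for `X`, `b = -1` for `P`) the prefactor of the
operator reduces to `iσ` and both claims become the functional equation
`Γ(1 - iσ) = -iσ Γ(-iσ)`, recorded as `groundState_shift`.
-/

open Complex

/-- The monomial-shift operator `X`: `(Xψ)(σ,b) = ψ(σ + i/2, b-1)`. -/
noncomputable def Xop (ψ : ℂ × ℤ → ℂ) : ℂ × ℤ → ℂ :=
  fun p => ψ (p.1 + Complex.I / 2, p.2 - 1)

/-- The monomial-shift operator `P`: `(Pψ)(σ,b) = (1/2 + iσ + b/2) ψ(σ - i/2, b+1)`. -/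
noncomputable def Pop (ψ : ℂ × ℤ → ℂ) : ℂ × ℤ → ℂ :=
  fun p => (1 / 2 + Complex.I * p.1 + (p.2 : ℂ) / 2) * ψ (p.1 - Complex.I / 2, p.2 + 1)

/-- The monomial-shift operator `X̃`: `(X̃ψ)(σ,b) = (1/2 + iσ - b/2) ψ(σ - i/2, b-1)`. -/
noncomputable def Xtop (ψ : ℂ × ℤ → ℂ) : ℂ × ℤ → ℂ :=
  fun p => (1 / 2 + Complex.I * p.1 - (p.2 : ℂ) / 2) * ψ (p.1 - Complex.I / 2, p.2 - 1)

/-- The monomial-shift operator `P̃`: `(P̃ψ)(σ,b) = ψ(σ + i/2, b+1)`. -/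
noncomputable def Ptop (ψ : ℂ × ℤ → ℂ) : ℂ × ℤ → ℂ :=
  fun p => ψ (p.1 + Complex.I / 2, p.2 + 1)

/-- The ground state `|1⟩(σ,b) = δ_{b,0} Γ(1/2 + b/2 - iσ)`. -/
noncomputable def groundState : ℂ × ℤ → ℂ :=
  fun p => if p.2 = 0 then Complex.Gamma (1 / 2 + (p.2 : ℂ) / 2 - Complex.I * p.1) else 0

/-- The value of the ground state at `(σ + i/2, 0)` is `-iσ` times its value at `(σ - i/2, 0)`:
this is `Γ(1 - iσ) = -iσ Γ(-iσ)`, which needs `σ ≠ 0` to stay away from the pole of `Γ` at `0`. -/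
lemma groundState_shift (σ : ℂ) (hσ : σ ≠ 0) :
    groundState (σ + Complex.I / 2, 0) =
      -(Complex.I * σ * groundState (σ - Complex.I / 2, 0)) := by
  have hplus : (1 / 2 + ((0 : ℤ) : ℂ) / 2 - Complex.I * (σ + Complex.I / 2))
      = -(Complex.I * σ) + 1 := by
    push_cast
    linear_combination (-1 / 2 : ℂ) * Complex.I_mul_I
  have hminus : (1 / 2 + ((0 : ℤ) : ℂ) / 2 - Complex.I * (σ - Complex.I / 2))
      = -(Complex.I * σ) := by
    push_cast
    linear_combination (1 / 2 : ℂ) * Complex.I_mul_I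
  have hne : -(Complex.I * σ) ≠ 0 := neg_ne_zero.mpr (mul_ne_zero Complex.I_ne_zero hσ)
  simp only [groundState, if_true]
  rw [hplus, hminus, Complex.Gamma_add_one _ hne]
  ring

/-- The ground state is supported on `b = 0`. -/
lemma groundState_of_ne (σ : ℂ) {b : ℤ} (hb : b ≠ 0) : groundState (σ, b) = 0 := by
  simp [groundState, hb]

/-- On the ground state, the holomorphic and antiholomorphic representations agree:
`X|1⟩ = -X̃|1⟩` and `P|1⟩ = -P̃|1⟩`. -/
theorem stmt7 (σ : ℂ) (hσ : σ ≠ 0) (b : ℤ) :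
    Xop groundState (σ, b) = -(Xtop groundState (σ, b)) ∧
    Pop groundState (σ, b) = -(Ptop groundState (σ, b)) := by
  constructor
  · simp only [Xop, Xtop]
    by_cases hb : b = 1
    · subst hb
      rw [sub_self, groundState_shift σ hσ]
      push_cast
      ring
    · have hb' : b - 1 ≠ 0 := sub_ne_zero.mpr hb
      simp [groundState_of_ne _ hb']
  · simp only [Pop, Ptop]
    by_cases hb : b = -1
    · subst hb
      rw [neg_add_cancel, groundState_shift σ hσ]
      push_cast
      ring
    · have hb' : b + 1 ≠ 0 := fun h => hb (eq_neg_of_add_eq_zero_left h)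
      simp [groundState_of_ne _ hb']
end

section
/- Let w_1, …, w_n be linear functionals on ℝ^m such that for every nonzero β ∈ ℝ^m there exists j with w_j(β) ≠ 0, let c_1, …, c_n be real constants, let R be a polynomial function on ℝ^m with complex coefficients, and let ζ be a linear functional on ℝ^m. Then the function σ ↦ e^{2πi ζ(σ)} R(σ) ∏_{j=1}^{n} (π / cosh(π(w_j(σ) + c_j))) is integrable on ℝ^m with respect to Lebesgue measure. (This is the convergence of the twisted trace integral for abelian gauge theories T = (ℂ*)^m acting on N = ℂ^n with mass parameters c_j.) -/
open Complex Real MeasureTheory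

/-!
Each factor satisfies `π / cosh (π (x + c)) ≤ 2π e^{π|c|} e^{-|x|}`, so the product over `j` is
bounded by a constant times `exp (-∑ j, |w j σ|)`. Since the weights separate points, the linear
map `σ ↦ (w j σ)_j` is injective, hence bounded below on a finite-dimensional space, and the sum
is at least `κ ‖σ‖` for some `κ > 0` (`exists_le_sum_abs`). A polynomial is `O((1 + ‖σ‖) ^ d)`
(`exists_norm_eval_le`), the phase has modulus one, and the exponential decay beats every power
of `1 + ‖σ‖`; the integrand is thus dominated by a multiple of `(1 + ‖σ‖) ^ (-(m + 1))`, which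
is integrable on `ℝ^m`.
-/

lemma pi_div_cosh_le (x c : ℝ) :
    π / Real.cosh (π * (x + c)) ≤ 2 * π * Real.exp (π * |c|) * Real.exp (-|x|) := by
  have hcosh : Real.exp (π * |x + c|) / 2 ≤ Real.cosh (π * (x + c)) := by
    rw [← Real.cosh_abs (π * (x + c)), abs_mul, abs_of_pos Real.pi_pos, Real.cosh_eq]
    have := Real.exp_pos (-(π * |x + c|))
    linarith
  have htri : |x| ≤ |x + c| + |c| := by
    have := abs_sub (x + c) c
    simpa using this
  have hexp : |x| ≤ π * |c| + π * |x + c| := by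
    have h3 := Real.pi_gt_three
    nlinarith [abs_nonneg x, abs_nonneg c, abs_nonneg (x + c)]
  rw [div_le_iff₀ (Real.cosh_pos _)]
  have h1 : 1 ≤ Real.exp (π * |c|) * Real.exp (-|x|) * Real.exp (π * |x + c|) := by
    rw [← Real.exp_add, ← Real.exp_add]
    exact Real.one_le_exp (by linarith)
  have h2 : 0 ≤ 2 * π * Real.exp (π * |c|) * Real.exp (-|x|) := by positivity
  calc π ≤ π * (Real.exp (π * |c|) * Real.exp (-|x|) * Real.exp (π * |x + c|)) :=
        le_mul_of_one_le_right Real.pi_pos.le h1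
    _ = 2 * π * Real.exp (π * |c|) * Real.exp (-|x|) * (Real.exp (π * |x + c|) / 2) := by ring
    _ ≤ _ := mul_le_mul_of_nonneg_left hcosh h2

lemma exists_norm_eval_le {m : ℕ} (R : MvPolynomial (Fin m) ℂ) :
    ∃ (C : ℝ) (d : ℕ), 0 ≤ C ∧ ∀ σ : EuclideanSpace ℝ (Fin m),
      ‖MvPolynomial.eval (fun i => ((σ i : ℝ) : ℂ)) R‖ ≤ C * (1 + ‖σ‖) ^ d := by
  induction R using MvPolynomial.induction_on with
  | C a => exact ⟨‖a‖, 0, norm_nonneg _, fun σ => by simp⟩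
  | add p q hp hq =>
    obtain ⟨C, d, hC, h⟩ := hp
    obtain ⟨D, e, hD, k⟩ := hq
    refine ⟨C + D, d + e, by positivity, fun σ => ?_⟩
    have h1 : 1 ≤ 1 + ‖σ‖ := by simp
    rw [map_add, add_mul]
    refine (norm_add_le _ _).trans (add_le_add ((h σ).trans ?_) ((k σ).trans ?_))
    · exact mul_le_mul_of_nonneg_left (pow_le_pow_right₀ h1 (by omega)) hC
    · exact mul_le_mul_of_nonneg_left (pow_le_pow_right₀ h1 (by omega)) hD
  | mul_X p i hp =>
    obtain ⟨C, d, hC, h⟩ := hp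
    refine ⟨C, d + 1, hC, fun σ => ?_⟩
    rw [map_mul, norm_mul, MvPolynomial.eval_X, Complex.norm_real, pow_succ, ← mul_assoc]
    refine mul_le_mul (h σ) ?_ (norm_nonneg _) (by positivity)
    have := PiLp.norm_apply_le σ i
    linarith

/-- Functionals without a common nonzero zero bound the norm: the joint map into `ℝ^n` is
injective, hence antilipschitz. -/
lemma exists_le_sum_abs {m n : ℕ} (w : Fin n → (EuclideanSpace ℝ (Fin m) →ₗ[ℝ] ℝ))
    (hw : ∀ β : EuclideanSpace ℝ (Fin m), β ≠ 0 → ∃ j : Fin n, w j β ≠ 0) :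
    ∃ κ : ℝ, 0 < κ ∧ ∀ σ, κ * ‖σ‖ ≤ ∑ j, |w j σ| := by
  have hker : LinearMap.ker (LinearMap.pi w) = ⊥ := by
    rw [LinearMap.ker_eq_bot']
    intro β hβ
    by_contra hne
    obtain ⟨j, hj⟩ := hw β hne
    exact hj (congrFun hβ j)
  obtain ⟨K, hK, hanti⟩ := LinearMap.exists_antilipschitzWith _ hker
  have hK' : (0 : ℝ) < K := hK
  refine ⟨(K : ℝ)⁻¹, by positivity, fun σ => ?_⟩
  have h1 : ‖σ‖ ≤ K * ‖LinearMap.pi w σ‖ := by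
    have := hanti.le_mul_dist σ 0
    simpa only [map_zero, dist_zero_right] using this
  have h2 : ‖LinearMap.pi w σ‖ ≤ ∑ j, |w j σ| := by
    refine (pi_norm_le_iff_of_nonneg (Finset.sum_nonneg fun _ _ => abs_nonneg _)).2 fun j => ?_
    exact Finset.single_le_sum (f := fun j => |w j σ|) (fun _ _ => abs_nonneg _)
      (Finset.mem_univ j)
  rw [inv_mul_le_iff₀ hK']
  exact h1.trans (mul_le_mul_of_nonneg_left h2 hK'.le)

lemma exp_neg_le {κ t : ℝ} (hκ : 0 < κ) (ht : 0 ≤ t) (N : ℕ) :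
    Real.exp (-(κ * t)) ≤ Real.exp κ * N.factorial / κ ^ N / (1 + t) ^ N := by
  have h := Real.pow_div_factorial_le_exp (κ * (1 + t)) (by positivity) N
  have hf : (0 : ℝ) < N.factorial := by exact_mod_cast N.factorial_pos
  rw [div_le_iff₀ hf, mul_pow] at h
  rw [div_div, le_div_iff₀ (by positivity)]
  calc Real.exp (-(κ * t)) * (κ ^ N * (1 + t) ^ N)
      ≤ Real.exp (-(κ * t)) * (Real.exp (κ * (1 + t)) * N.factorial) := by gcongr
    _ = Real.exp κ * N.factorial := by
        rw [← mul_assoc, ← Real.exp_add]; ring_nf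

/-- Convergence of the twisted trace integral for abelian gauge theories
`T = (ℂ*)^m` acting on `N = ℂ^n`: if the weights `w_j` span the dual space
(the conical condition for an abelian theory), then
`σ ↦ e^{2πiζ(σ)} R(σ) ∏_j π/cosh(π(w_j(σ) + c_j))` is integrable on `ℝ^m`. -/
theorem stmt13 (m n : ℕ)
    (w : Fin n → (EuclideanSpace ℝ (Fin m) →ₗ[ℝ] ℝ))
    (c : Fin n → ℝ)
    (hw : ∀ β : EuclideanSpace ℝ (Fin m), β ≠ 0 → ∃ j : Fin n, w j β ≠ 0)
    (R : MvPolynomial (Fin m) ℂ)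
    (ζ : EuclideanSpace ℝ (Fin m) →ₗ[ℝ] ℝ) :
    MeasureTheory.Integrable
      (fun σ : EuclideanSpace ℝ (Fin m) =>
        Complex.exp (2 * Real.pi * Complex.I * (ζ σ)) *
          MvPolynomial.eval (fun i => ((σ i : ℝ) : ℂ)) R *
            ∏ j : Fin n, ((Real.pi : ℂ) / ((Real.cosh (Real.pi * (w j σ + c j)) : ℝ) : ℂ)))
      (MeasureTheory.volume : MeasureTheory.Measure (EuclideanSpace ℝ (Fin m))) := by
  obtain ⟨C, d, hC, hR⟩ := exists_norm_eval_le R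
  obtain ⟨κ, hκ, hsum⟩ := exists_le_sum_abs w hw
  set A : ℝ := ∏ j, (2 * π * Real.exp (π * |c j|)) with hA
  have hA0 : 0 ≤ A := Finset.prod_nonneg fun j _ => by positivity
  -- The power needed to absorb the polynomial growth and still leave `(1 + ‖σ‖) ^ (-(m + 1))`.
  set N : ℕ := d + (m + 1) with hN
  set B : ℝ := Real.exp κ * N.factorial / κ ^ N with hB
  have hdom : Integrable (fun σ : EuclideanSpace ℝ (Fin m) =>
      (C * A * B) * (1 + ‖σ‖) ^ (-((m : ℝ) + 1))) volume :=
    (integrable_one_add_norm (by simp)).const_mul _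
  refine hdom.mono' ?_ (Filter.Eventually.of_forall fun σ => ?_)
  · have hζ : Continuous ζ := ζ.continuous_of_finiteDimensional
    have hwc : ∀ j, Continuous (w j) := fun j => (w j).continuous_of_finiteDimensional
    have hpoly : Continuous fun σ : EuclideanSpace ℝ (Fin m) =>
        MvPolynomial.eval (fun i => ((σ i : ℝ) : ℂ)) R :=
      (MvPolynomial.continuous_eval R).comp (by fun_prop)
    refine Continuous.aestronglyMeasurable ((Continuous.mul ?_ hpoly).mul ?_)
    · fun_prop
    · refine continuous_finsetProd _ fun j _ => Continuous.div continuous_const ?_ fun σ => ?_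
      · have := hwc j
        exact Complex.continuous_ofReal.comp (Real.continuous_cosh.comp (by fun_prop))
      · exact Complex.ofReal_ne_zero.2 (Real.cosh_pos _).ne'
  · have hphase : ‖Complex.exp (2 * π * Complex.I * (ζ σ))‖ = 1 := by
      have : (2 * π * Complex.I * (ζ σ) : ℂ) = ((2 * π * ζ σ : ℝ) : ℂ) * Complex.I := by
        push_cast; ring
      rw [this, Complex.norm_exp_ofReal_mul_I]
    have hprod : ‖∏ j, ((π : ℂ) / ((Real.cosh (π * (w j σ + c j)) : ℝ) : ℂ))‖
        ≤ A * Real.exp (-(κ * ‖σ‖)) := by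
      rw [norm_prod]
      calc ∏ j, ‖(π : ℂ) / ((Real.cosh (π * (w j σ + c j)) : ℝ) : ℂ)‖
          ≤ ∏ j, (2 * π * Real.exp (π * |c j|) * Real.exp (-|w j σ|)) := by
            refine Finset.prod_le_prod (fun _ _ => norm_nonneg _) fun j _ => ?_
            rw [← Complex.ofReal_div, Complex.norm_real, Real.norm_eq_abs,
              abs_of_pos (div_pos Real.pi_pos (Real.cosh_pos _))]
            exact pi_div_cosh_le _ _
        _ = A * Real.exp (-∑ j, |w j σ|) := by
            rw [Finset.prod_mul_distrib, ← Real.exp_sum, Finset.sum_neg_distrib]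
        _ ≤ A * Real.exp (-(κ * ‖σ‖)) :=
            mul_le_mul_of_nonneg_left (Real.exp_le_exp.2 (neg_le_neg (hsum σ))) hA0
    have hpos : 0 < 1 + ‖σ‖ := by positivity
    rw [norm_mul, norm_mul, hphase, one_mul]
    calc _ ≤ (C * (1 + ‖σ‖) ^ d) * (A * (B / (1 + ‖σ‖) ^ N)) :=
          mul_le_mul (hR σ) (hprod.trans (mul_le_mul_of_nonneg_left
            (exp_neg_le hκ (norm_nonneg σ) N) hA0)) (norm_nonneg _) (by positivity)
      _ = (C * A * B) * (1 + ‖σ‖) ^ (-((m : ℝ) + 1)) := by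
          have hcast : (m : ℝ) + 1 = ((m + 1 : ℕ) : ℝ) := by push_cast; rfl
          rw [Real.rpow_neg hpos.le, hcast, Real.rpow_natCast, hN, pow_add]
          field_simp
end
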